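/- arXiv:2012.14550 — 7 statements merged into one kernel-verified Lean document; each statement's English description precedes it below -/
import Mathlib

section
/- Let δ > 0 and let ψ be an admissible δ-mollifier. Let N ≥ 1, let u, v : 𝕋^N → ℝ be measurable, and let ρ : 𝕋^N → [0,∞) be integrable with ∫_{𝕋^N} ρ(z) dz = 1. Then | ∫_{𝕋^N} ∫_{𝕋^N} ∫_ℝ ρ(x−y) 1_{u(x)>ξ} 1_{v(y)≤ξ} dξ dx dy − ∫_{𝕋^N} ∫_{𝕋^N} ∫_ℝ ∫_ℝ ρ(x−y) ψ(ξ−ζ) 1_{u(x)>ξ} 1_{v(y)≤ζ} dξ dζ dx dy | ≤ 2δ. -/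
open MeasureTheory Set

/-!
For `w = u(x) - v(y)`, the first inner integral is `ρ(x - y) w⁺`, and the substitution `ξ = ζ + r`
together with Fubini turns the second one into `ρ(x - y) ∫ ψ(r) (w - r)⁺ dr`. Since `w ↦ w⁺` is
`1`-Lipschitz and `ψ` is a probability density living on `|r| < δ`, the two differ by at most
`δ ρ(x - y)`, and integrating over the torus bounds the error by `δ`.

The functions `u` and `v` are merely measurable, so the outer integrals may diverge, in which case
Bochner integrals take the value `0`. This is harmless: the difference of the two integrands is
dominated by an integrable function, so one of them is integrable iff the other is
(`abs_integral_sub_integral_le`, applied once in `x` and once in `y`).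
-/

/-- Holds without integrability of `f` or `g`: by domination either both are integrable, or
neither is and both integrals are `0`. -/
lemma abs_integral_sub_integral_le {α : Type*} [MeasurableSpace α] {μ : Measure α}
    {f g h : α → ℝ} (hf : AEStronglyMeasurable f μ) (hg : AEStronglyMeasurable g μ)
    (hh : Integrable h μ) (hle : ∀ a, |f a - g a| ≤ h a) :
    |(∫ a, f a ∂μ) - ∫ a, g a ∂μ| ≤ ∫ a, h a ∂μ := by
  have hd : Integrable (fun a => f a - g a) μ :=
    hh.mono' (hf.sub hg) (Filter.Eventually.of_forall hle)
  by_cases hfi : Integrable f μ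
  · have hgi : Integrable g μ := by
      refine (hfi.sub hd).congr (Filter.Eventually.of_forall fun a => ?_)
      simp
    rw [← integral_sub hfi hgi]
    exact norm_integral_le_of_norm_le (f := fun a => f a - g a) hh
      (Filter.Eventually.of_forall hle)
  · have hgi : ¬ Integrable g μ := fun hgi => hfi <| by
      refine (hgi.add hd).congr (Filter.Eventually.of_forall fun a => ?_)
      simp
    rw [integral_undef hfi, integral_undef hgi, sub_self, abs_zero]
    exact integral_nonneg fun a => (abs_nonneg _).trans (hle a)

lemma integral_indicator_Iio_mul_Ici (a b : ℝ) :
    ∫ ξ : ℝ, (Iio a).indicator (1 : ℝ → ℝ) ξ * (Ici b).indicator (1 : ℝ → ℝ) ξ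
      = max (a - b) 0 := by
  have h : ∀ ξ : ℝ, (Iio a).indicator (1 : ℝ → ℝ) ξ * (Ici b).indicator (1 : ℝ → ℝ) ξ
      = (Ico b a).indicator (1 : ℝ → ℝ) ξ := by
    intro ξ
    rw [← Ici_inter_Iio, inter_comm, inter_indicator_one]
    rfl
  simp_rw [h]
  rw [integral_indicator_one measurableSet_Ico]
  simp [Measure.real, ENNReal.toReal_ofReal']

/-- The convolution of the positive part `w ↦ w⁺` with `ψ`. -/
noncomputable def mollifiedPosPart (ψ : ℝ → ℝ) (w : ℝ) : ℝ := ∫ r : ℝ, ψ r * max (w - r) 0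

lemma measurable_mollifiedPosPart {ψ : ℝ → ℝ} (hψm : Measurable ψ) :
    Measurable (mollifiedPosPart ψ) := by
  have h : StronglyMeasurable (fun p : ℝ × ℝ => ψ p.2 * max (p.1 - p.2) 0) :=
    Measurable.stronglyMeasurable (by fun_prop)
  exact h.integral_prod_right'.measurable

lemma abs_posPart_sub_mollifiedPosPart_le {δ : ℝ} {ψ : ℝ → ℝ}
    (hψm : Measurable ψ) (hψ0 : ∀ r, 0 ≤ ψ r) (hψs : ∀ r, δ ≤ |r| → ψ r = 0)
    (hψ1 : (∫ r : ℝ, ψ r) = 1) (w : ℝ) :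
    |max w 0 - mollifiedPosPart ψ w| ≤ δ := by
  have hψi : Integrable ψ := .of_integral_ne_zero (by rw [hψ1]; exact one_ne_zero)
  have key := abs_integral_sub_integral_le (μ := volume)
    (f := fun r => ψ r * max w 0) (g := fun r => ψ r * max (w - r) 0) (h := fun r => ψ r * δ)
    (Measurable.aestronglyMeasurable (by fun_prop))
    (Measurable.aestronglyMeasurable (by fun_prop)) (hψi.mul_const δ) (fun r => by
      rw [← mul_sub, abs_mul, abs_of_nonneg (hψ0 r)]
      rcases le_or_gt δ |r| with hr | hr
      · simp [hψs r hr]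
      · refine mul_le_mul_of_nonneg_left ?_ (hψ0 r)
        have := abs_max_sub_max_le_abs w (w - r) 0
        rw [sub_sub_cancel] at this
        exact this.trans hr.le)
  rwa [integral_mul_const, integral_mul_const, hψ1, one_mul, one_mul] at key

lemma integral_integral_mollifier {δ : ℝ} {ψ : ℝ → ℝ}
    (hψm : Measurable ψ) (hψ0 : ∀ r, 0 ≤ ψ r) (hψs : ∀ r, δ ≤ |r| → ψ r = 0)
    (hψi : Integrable ψ) (a b c : ℝ) :
    ∫ ζ : ℝ, ∫ ξ : ℝ, c * ψ (ξ - ζ) * ((Iio a).indicator (1 : ℝ → ℝ) ξ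
      * (Ici b).indicator (1 : ℝ → ℝ) ζ) = c * mollifiedPosPart ψ (a - b) := by
  -- the substitution `ξ = r + ζ`
  have hsub : ∀ ζ : ℝ, ∫ ξ : ℝ, c * ψ (ξ - ζ) * ((Iio a).indicator (1 : ℝ → ℝ) ξ
      * (Ici b).indicator (1 : ℝ → ℝ) ζ)
      = c * ∫ r : ℝ, ψ r * ((Iio (a - r)).indicator (1 : ℝ → ℝ) ζ
      * (Ici b).indicator (1 : ℝ → ℝ) ζ) := by
    intro ζ
    rw [← integral_add_right_eq_self _ ζ, ← integral_const_mul]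
    refine integral_congr_ae (Filter.Eventually.of_forall fun r => ?_)
    have : (Iio a).indicator (1 : ℝ → ℝ) (r + ζ) = (Iio (a - r)).indicator (1 : ℝ → ℝ) ζ := by
      simp only [indicator, mem_Iio, lt_sub_iff_add_lt']
      rfl
    simp only [add_sub_cancel_right, this, mul_assoc]
  simp_rw [hsub]
  rw [integral_const_mul, integral_integral_swap]
  · simp_rw [integral_const_mul, integral_indicator_Iio_mul_Ici, mollifiedPosPart]
    congr 2 with r
    rw [sub_right_comm]
  · -- on the support of `ψ`, only `ζ ∈ [b, a + δ]` contributes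
    have hI : Integrable ((Icc b (a + δ)).indicator (1 : ℝ → ℝ)) :=
      (integrable_indicator_iff measurableSet_Icc).2 (by
        exact integrableOn_const (by simp) (by simp))
    have hdom := hI.mul_prod hψi
    refine hdom.mono' (Measurable.aestronglyMeasurable ?_)
      (Filter.Eventually.of_forall fun p => ?_)
    · have h1 : Measurable fun p : ℝ × ℝ => (Iio (a - p.2)).indicator (1 : ℝ → ℝ) p.1 := by
        have hs : MeasurableSet {p : ℝ × ℝ | p.1 < a - p.2} :=
          measurableSet_lt (by fun_prop) (by fun_prop)
        exact (measurable_one.indicator hs :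
          Measurable ({p : ℝ × ℝ | p.1 < a - p.2}.indicator (1 : ℝ × ℝ → ℝ)))
      have h2 : Measurable fun p : ℝ × ℝ => (Ici b).indicator (1 : ℝ → ℝ) p.1 :=
        (measurable_one.indicator measurableSet_Ici).comp measurable_fst
      exact (hψm.comp measurable_snd).mul (h1.mul h2)
    · obtain ⟨ζ, r⟩ := p
      have hr0 := hψ0 r
      rcases le_or_gt δ |r| with hr | hr
      · simp [hψs r hr]
      · have hr' := (abs_lt.1 hr).1
        by_cases h1 : ζ < a - r
        · by_cases h2 : b ≤ ζ
          · have h3 : ζ ≤ a + δ := by linarith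
            simp [Function.uncurry, indicator, h1, h2, h3, abs_of_nonneg hr0]
          · simp [Function.uncurry, indicator, h2]
        · simp only [Function.uncurry, indicator, mem_Iio, h1, if_false, zero_mul, mul_zero,
            norm_zero]
          split_ifs <;> simp [hr0]

/-- Replacing `1_{u(x)>ξ} 1_{v(y)≤ξ}` by its mollified version in `ξ, ζ` with an
admissible `δ`-mollifier `ψ` produces an error of at most `2δ`. -/
theorem mollification_error_le_two_delta
    {N : ℕ} (hN : 1 ≤ N) {δ : ℝ} (hδ : 0 < δ) (ψ : ℝ → ℝ)
    (hψm : Measurable ψ) (hψ0 : ∀ r, 0 ≤ ψ r) (hψe : ∀ r, ψ (-r) = ψ r)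
    (hψs : ∀ r, δ ≤ |r| → ψ r = 0) (hψ1 : (∫ r : ℝ, ψ r) = 1)
    (u v : (Fin N → AddCircle (1 : ℝ)) → ℝ) (hu : Measurable u) (hv : Measurable v)
    (ρ : (Fin N → AddCircle (1 : ℝ)) → ℝ) (hρ0 : ∀ z, 0 ≤ ρ z)
    (hρi : Integrable ρ) (hρ1 : (∫ z, ρ z) = 1) :
    |(∫ y, ∫ x, ∫ ξ : ℝ,
        ρ (x - y) * ((Set.Iio (u x)).indicator (1 : ℝ → ℝ) ξ
          * (Set.Ici (v y)).indicator (1 : ℝ → ℝ) ξ))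
      - ∫ y, ∫ x, ∫ ζ : ℝ, ∫ ξ : ℝ,
          ρ (x - y) * ψ (ξ - ζ) * ((Set.Iio (u x)).indicator (1 : ℝ → ℝ) ξ
            * (Set.Ici (v y)).indicator (1 : ℝ → ℝ) ζ)| ≤ 2 * δ := by
  have hψi : Integrable ψ := .of_integral_ne_zero (by rw [hψ1]; exact one_ne_zero)
  have : IsProbabilityMeasure (volume : Measure (Fin N → AddCircle (1 : ℝ))) :=
    ⟨by simp [volume_pi, Measure.pi_univ]⟩
  simp_rw [integral_integral_mollifier hψm hψ0 hψs hψi, integral_const_mul,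
    integral_indicator_Iio_mul_Ici]
  have hρy : ∀ y, Integrable fun x => ρ (x - y) := fun y => hρi.comp_sub_right y
  have hρp : AEStronglyMeasurable
      (fun p : (Fin N → AddCircle (1 : ℝ)) × (Fin N → AddCircle (1 : ℝ)) => ρ (p.2 - p.1))
      (volume.prod volume) :=
    (hρi.aestronglyMeasurable.comp_quasiMeasurePreserving
      (quasiMeasurePreserving_sub volume volume)).prod_swap
  have hg := measurable_mollifiedPosPart hψm
  have hp : Measurable fun w : ℝ => max w 0 := by fun_prop
  have hx : ∀ q : ℝ → ℝ, Measurable q → ∀ y,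
      AEStronglyMeasurable (fun x => ρ (x - y) * q (u x - v y)) := fun q hq y =>
    (hρy y).aestronglyMeasurable.mul
      (Measurable.aestronglyMeasurable (by fun_prop))
  have hy : ∀ q : ℝ → ℝ, Measurable q →
      AEStronglyMeasurable (fun y => ∫ x, ρ (x - y) * q (u x - v y)) := fun q hq =>
    AEStronglyMeasurable.integral_prod_right' (hρp.mul
      (Measurable.aestronglyMeasurable (f := fun p => q (u p.2 - v p.1)) (by fun_prop)))
  have hpt : ∀ y, |(∫ x, ρ (x - y) * max (u x - v y) 0)
      - ∫ x, ρ (x - y) * mollifiedPosPart ψ (u x - v y)| ≤ δ := fun y => by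
    refine (abs_integral_sub_integral_le (hx _ hp y) (hx _ hg y) ((hρy y).mul_const δ)
      fun x => ?_).trans_eq ?_
    · rw [← mul_sub, abs_mul, abs_of_nonneg (hρ0 _)]
      exact mul_le_mul_of_nonneg_left
        (abs_posPart_sub_mollifiedPosPart_le hψm hψ0 hψs hψ1 _) (hρ0 _)
    · rw [integral_mul_const, integral_sub_right_eq_self ρ y, hρ1, one_mul]
  refine (abs_integral_sub_integral_le (hy _ hp) (hy _ hg) (integrable_const δ) hpt).trans ?_
  simp only [integral_const, probReal_univ, one_smul]
  linarith
end

section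
/- Let δ > 0 and let ψ be an admissible δ-mollifier. Then for all real numbers a and b, | ∫_ℝ ∫_ℝ 1_{a>ξ} 1_{b≤ζ} ψ(ξ−ζ) dξ dζ − (a−b)⁺ | ≤ 2δ, where (a−b)⁺ = max(a−b, 0). -/
/-! The inner integral is `1_{b≤ζ} G(ζ)` with `G(ζ) = ∫ 1_{a>ξ} ψ(ξ-ζ) dξ`. Since `ψ` has unit mass
and lives in `(-δ, δ)`, `0 ≤ G ≤ 1`, `G = 1` on `(-∞, a-δ]` and `G = 0` on `[a+δ, ∞)`. Hence the
inner integral lies between the indicators of `[b, a-δ]` and `[b, a+δ]`, and the double integral lies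
between `(a-δ-b)⁺` and `(a+δ-b)⁺`, both within `δ` of `(a-b)⁺`. -/

open MeasureTheory Set

theorem mollified_positive_part_error
    {δ : ℝ} (hδ : 0 < δ) (ψ : ℝ → ℝ)
    (hψm : Measurable ψ) (hψ0 : ∀ r, 0 ≤ ψ r) (hψe : ∀ r, ψ (-r) = ψ r)
    (hψs : ∀ r, δ ≤ |r| → ψ r = 0) (hψ1 : (∫ r : ℝ, ψ r) = 1)
    (a b : ℝ) :
    |(∫ ζ : ℝ, ∫ ξ : ℝ,
        (Set.Iio a).indicator (1 : ℝ → ℝ) ξ * (Set.Ici b).indicator (1 : ℝ → ℝ) ζ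
          * ψ (ξ - ζ))
      - max (a - b) 0| ≤ 2 * δ := by
  set K : ℝ → ℝ → ℝ := fun ζ ξ =>
    (Set.Iio a).indicator (1 : ℝ → ℝ) ξ * (Set.Ici b).indicator (1 : ℝ → ℝ) ζ * ψ (ξ - ζ) with hK
  set F : ℝ → ℝ := fun ζ => ∫ ξ, K ζ ξ with hF
  change |(∫ ζ, F ζ) - max (a - b) 0| ≤ 2 * δ
  -- A non-integrable function would have Bochner integral `0 ≠ 1`.
  have hψi : Integrable ψ := by
    by_contra h
    rw [integral_undef h] at hψ1
    exact zero_ne_one hψ1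
  have hsi : ∀ ζ, Integrable (fun ξ => ψ (ξ - ζ)) := fun ζ => hψi.comp_sub_right ζ
  have hs1 : ∀ ζ, ∫ ξ, ψ (ξ - ζ) = 1 := fun ζ => by
    rw [integral_sub_right_eq_self ψ ζ, hψ1]
  have hK0 : ∀ ζ ξ, 0 ≤ K ζ ξ := fun ζ ξ =>
    mul_nonneg (mul_nonneg (indicator_nonneg (fun _ _ => zero_le_one) _)
      (indicator_nonneg (fun _ _ => zero_le_one) _)) (hψ0 _)
  have hKle : ∀ ζ ξ, K ζ ξ ≤ ψ (ξ - ζ) := fun ζ ξ => by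
    have := hψ0 (ξ - ζ)
    simp only [hK, indicator_apply, Pi.one_apply]
    split_ifs <;> simp [this]
  have hF0 : ∀ ζ, 0 ≤ F ζ := fun ζ => integral_nonneg (hK0 ζ)
  have hF1 : ∀ ζ, F ζ ≤ 1 := fun ζ => by
    rw [← hs1 ζ]
    exact integral_mono_of_nonneg (.of_forall (hK0 ζ)) (hsi ζ) (.of_forall (hKle ζ))
  have hub : ∀ ζ, F ζ ≤ (Icc b (a + δ)).indicator 1 ζ := fun ζ => by
    by_cases h : ζ ∈ Icc b (a + δ)
    · simpa [indicator_of_mem h] using hF1 ζ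
    · rw [indicator_of_notMem h]
      have hz : ∀ ξ, K ζ ξ = 0 := fun ξ => by
        simp only [hK, indicator_apply, Pi.one_apply, mem_Iio, mem_Ici]
        split_ifs with h1 h2
        · have h3 : a + δ < ζ := by
            by_contra h3
            exact h ⟨h2, not_lt.mp h3⟩
          rw [hψs (ξ - ζ) (le_abs.mpr (Or.inr (by linarith)))]
          simp
        all_goals simp
      simp [hF, hz]
  have hlb : ∀ ζ, (Icc b (a - δ)).indicator 1 ζ ≤ F ζ := fun ζ => by
    by_cases h : ζ ∈ Icc b (a - δ)
    · have hz : ∀ ξ, K ζ ξ = ψ (ξ - ζ) := fun ξ => by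
        simp only [hK, indicator_apply, Pi.one_apply, mem_Iio, mem_Ici, if_pos h.1]
        split_ifs with h1
        · simp
        · have h2 := h.2
          rw [hψs (ξ - ζ) (le_abs.mpr (Or.inl (by linarith)))]
          simp
      simp [hF, hz, hs1, indicator_of_mem h]
    · rw [indicator_of_notMem h]
      exact hF0 ζ
  have hint : ∀ c, Integrable ((Icc b c).indicator (1 : ℝ → ℝ)) := fun c =>
    (integrable_indicator_iff measurableSet_Icc).mpr
      (integrableOn_const (by simp) (by simp))
  have hval : ∀ c, ∫ ζ, (Icc b c).indicator (1 : ℝ → ℝ) ζ = max (c - b) 0 := fun c => by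
    rw [integral_indicator_one measurableSet_Icc, Real.volume_real_Icc]
  have hFm : StronglyMeasurable F := by
    have hKm : Measurable (fun p : ℝ × ℝ => K p.1 p.2) :=
      (((measurable_one.indicator measurableSet_Iio).comp measurable_snd).mul
        ((measurable_one.indicator measurableSet_Ici).comp measurable_fst)).mul
        (hψm.comp (measurable_snd.sub measurable_fst))
    exact hKm.stronglyMeasurable.integral_prod_right'
  have hFi : Integrable F := (hint (a + δ)).mono' hFm.aestronglyMeasurable
    (.of_forall fun ζ => by rw [Real.norm_of_nonneg (hF0 ζ)]; exact hub ζ)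
  have hU := integral_mono hFi (hint (a + δ)) hub
  have hL := integral_mono (hint (a - δ)) hFi hlb
  rw [hval] at hU hL
  rw [abs_le]
  constructor
  · have : max (a - b) 0 ≤ max (a - δ - b) 0 + δ :=
      max_le (by linarith [le_max_left (a - δ - b) 0]) (by linarith [le_max_right (a - δ - b) 0])
    linarith
  · have : max (a + δ - b) 0 ≤ max (a - b) 0 + δ :=
      max_le (by linarith [le_max_left (a - b) 0]) (by linarith [le_max_right (a - b) 0])
    linarith
end

section
/- Let δ > 0 and let ψ be an admissible δ-mollifier. Then for all real numbers a and b, | ∫_ℝ ∫_ℝ ψ(ξ−ζ) ( 1_{a>ξ} 1_{b≤ζ} + 1_{a≤ξ} 1_{b>ζ} ) dξ dζ − |a−b| | ≤ 4δ. -/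
open MeasureTheory Set

/-!
Write `K ξ ζ` for the `{0,1}`-valued kernel multiplying `ψ (ξ - ζ)`. On the diagonal it is the
indicator of the half-open interval between `a` and `b`, so its integral is `|a - b|`. Since `ψ`
has mass one, the inner integral minus `K ζ ζ` equals `∫ ψ (ξ - ζ) (K ξ ζ - K ζ ζ) dξ`. This is
at most one in absolute value, and it vanishes when `δ ≤ |ζ - a|`, because then every `ξ` with
`|ξ - ζ| < δ` lies on the same side of `a` as `ζ`. Integrating over `ζ`, the error is at most
the length `2δ` of `[a - δ, a + δ]`.
-/

/-- The kernel `1_{a>ξ} 1_{b≤ζ} + 1_{a≤ξ} 1_{b>ζ}`, indicating that exactly one of `ξ < a` and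
`ζ < b` holds. -/
noncomputable def crossKernel (a b ξ ζ : ℝ) : ℝ :=
  (Set.Iio a).indicator (1 : ℝ → ℝ) ξ * (Set.Ici b).indicator (1 : ℝ → ℝ) ζ
    + (Set.Ici a).indicator (1 : ℝ → ℝ) ξ * (Set.Iio b).indicator (1 : ℝ → ℝ) ζ

lemma crossKernel_eq (a b ξ ζ : ℝ) :
    crossKernel a b ξ ζ = if ξ < a then (if ζ < b then 0 else 1) else (if ζ < b then 1 else 0) := by
  unfold crossKernel
  by_cases h1 : ξ < a <;> by_cases h2 : ζ < b <;>
    simp [indicator, h1, h2, not_le.mpr, not_lt.mp]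

lemma crossKernel_diag (a b ζ : ℝ) :
    crossKernel a b ζ ζ = (Ico (min a b) (max a b)).indicator (1 : ℝ → ℝ) ζ := by
  rw [crossKernel_eq]
  simp only [indicator, mem_Ico, Pi.one_apply, min_le_iff, lt_max_iff]
  split_ifs <;> grind

lemma abs_crossKernel_sub_le (a b ξ ζ : ℝ) :
    |crossKernel a b ξ ζ - crossKernel a b ζ ζ| ≤ 1 := by
  rw [crossKernel_eq, crossKernel_eq]
  split_ifs <;> norm_num

lemma measurable_crossKernel (a b : ℝ) :
    Measurable fun p : ℝ × ℝ => crossKernel a b p.2 p.1 := by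
  have h (s : Set ℝ) (hs : MeasurableSet s) : Measurable (s.indicator (1 : ℝ → ℝ)) :=
    measurable_one.indicator hs
  unfold crossKernel
  exact (((h _ measurableSet_Iio).comp measurable_snd).mul
      ((h _ measurableSet_Ici).comp measurable_fst)).add
    (((h _ measurableSet_Ici).comp measurable_snd).mul
      ((h _ measurableSet_Iio).comp measurable_fst))

/-- Replacing the inner integral by the diagonal value of the kernel costs at most one, and
only for `ζ` within `δ` of `a`. -/
lemma abs_inner_sub_diag_le {δ : ℝ} (ψ : ℝ → ℝ) (hψ0 : ∀ r, 0 ≤ ψ r)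
    (hψs : ∀ r, δ ≤ |r| → ψ r = 0) (hψ1 : (∫ r : ℝ, ψ r) = 1) (a b ζ : ℝ) :
    |(∫ ξ : ℝ, ψ (ξ - ζ) * crossKernel a b ξ ζ) - crossKernel a b ζ ζ|
      ≤ (Icc (a - δ) (a + δ)).indicator (1 : ℝ → ℝ) ζ := by
  -- A nonzero Bochner integral forces integrability.
  have hψi : Integrable ψ := by
    by_contra h
    rw [integral_undef h] at hψ1
    exact zero_ne_one hψ1
  have hi : Integrable fun ξ => ψ (ξ - ζ) := hψi.comp_sub_right ζ
  have h1 : ∫ ξ, ψ (ξ - ζ) = 1 := by rw [integral_sub_right_eq_self ψ ζ, hψ1]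
  have hb (ξ : ℝ) : |crossKernel a b ξ ζ| ≤ 1 := by
    rw [crossKernel_eq]; split_ifs <;> norm_num
  have hKm : Measurable fun ξ => crossKernel a b ξ ζ :=
    (measurable_crossKernel a b).comp (measurable_const.prodMk measurable_id)
  have hKi : Integrable fun ξ => ψ (ξ - ζ) * crossKernel a b ξ ζ :=
    hi.mul_bdd (c := 1) hKm.aestronglyMeasurable (Filter.Eventually.of_forall hb)
  have key : (∫ ξ, ψ (ξ - ζ) * crossKernel a b ξ ζ) - crossKernel a b ζ ζ
      = ∫ ξ, ψ (ξ - ζ) * (crossKernel a b ξ ζ - crossKernel a b ζ ζ) := by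
    simp_rw [mul_sub]
    rw [integral_sub hKi (hi.mul_const _), integral_mul_const, h1, one_mul]
  rw [key]
  by_cases hζ : ζ ∈ Icc (a - δ) (a + δ)
  · rw [indicator_of_mem hζ, Pi.one_apply, ← h1, ← Real.norm_eq_abs]
    refine norm_integral_le_of_norm_le hi (Filter.Eventually.of_forall fun ξ => ?_)
    rw [norm_mul, Real.norm_of_nonneg (hψ0 _), Real.norm_eq_abs]
    exact mul_le_of_le_one_right (hψ0 _) (abs_crossKernel_sub_le a b ξ ζ)
  · rw [indicator_of_notMem hζ]
    have hz (ξ : ℝ) : ψ (ξ - ζ) * (crossKernel a b ξ ζ - crossKernel a b ζ ζ) = 0 := by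
      by_cases h : δ ≤ |ξ - ζ|
      · rw [hψs _ h, zero_mul]
      · have hlt := abs_lt.mp (not_le.mp h)
        have hside : ξ < a ↔ ζ < a := by
          simp only [mem_Icc, not_and_or, not_le] at hζ
          constructor <;> intro h' <;> rcases hζ with h2 | h2 <;> linarith
        rw [crossKernel_eq, crossKernel_eq, if_congr hside rfl rfl, sub_self, mul_zero]
    simp [hz]

theorem mollified_abs_error
    {δ : ℝ} (hδ : 0 < δ) (ψ : ℝ → ℝ)
    (hψm : Measurable ψ) (hψ0 : ∀ r, 0 ≤ ψ r) (hψe : ∀ r, ψ (-r) = ψ r)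
    (hψs : ∀ r, δ ≤ |r| → ψ r = 0) (hψ1 : (∫ r : ℝ, ψ r) = 1)
    (a b : ℝ) :
    |(∫ ζ : ℝ, ∫ ξ : ℝ,
        ψ (ξ - ζ) * ((Set.Iio a).indicator (1 : ℝ → ℝ) ξ * (Set.Ici b).indicator (1 : ℝ → ℝ) ζ
          + (Set.Ici a).indicator (1 : ℝ → ℝ) ξ * (Set.Iio b).indicator (1 : ℝ → ℝ) ζ))
      - (|a - b|)| ≤ 4 * δ := by
  change |(∫ ζ : ℝ, ∫ ξ : ℝ, ψ (ξ - ζ) * crossKernel a b ξ ζ) - (|a - b|)| ≤ 4 * δ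
  set F : ℝ → ℝ := fun ζ => ∫ ξ : ℝ, ψ (ξ - ζ) * crossKernel a b ξ ζ with hF
  set G : ℝ → ℝ := (Ico (min a b) (max a b)).indicator 1 with hG
  have hGi : Integrable G :=
    (integrable_indicator_iff measurableSet_Ico).mpr (integrableOn_const (by simp))
  have hGint : ∫ ζ, G ζ = |a - b| := by
    rw [hG, integral_indicator_one measurableSet_Ico, Real.volume_real_Ico_of_le min_le_max,
      max_sub_min_eq_abs']
  have hIi : Integrable ((Icc (a - δ) (a + δ)).indicator (1 : ℝ → ℝ)) :=
    (integrable_indicator_iff measurableSet_Icc).mpr (integrableOn_const (by simp))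
  have hIint : ∫ ζ, (Icc (a - δ) (a + δ)).indicator (1 : ℝ → ℝ) ζ = 2 * δ := by
    rw [integral_indicator_one measurableSet_Icc, Real.volume_real_Icc_of_le (by linarith)]
    ring
  have hFm : StronglyMeasurable F := by
    have hm : Measurable fun p : ℝ × ℝ => ψ (p.2 - p.1) * crossKernel a b p.2 p.1 :=
      (hψm.comp (measurable_snd.sub measurable_fst)).mul (measurable_crossKernel a b)
    exact hm.stronglyMeasurable.integral_prod_right'
  have hbound : ∀ᵐ ζ, ‖F ζ - G ζ‖ ≤ (Icc (a - δ) (a + δ)).indicator (1 : ℝ → ℝ) ζ :=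
    Filter.Eventually.of_forall fun ζ => by
      have := abs_inner_sub_diag_le ψ hψ0 hψs hψ1 a b ζ
      rwa [crossKernel_diag] at this
  have hDi : Integrable fun ζ => F ζ - G ζ :=
    hIi.mono' (hFm.aestronglyMeasurable.sub hGi.aestronglyMeasurable) hbound
  have hFi : Integrable F :=
    (hDi.add hGi).congr (Filter.Eventually.of_forall fun ζ => sub_add_cancel (F ζ) (G ζ))
  rw [← hGint, ← integral_sub hFi hGi, ← Real.norm_eq_abs]
  have := norm_integral_le_of_norm_le hIi hbound
  rw [hIint] at this
  linarith
end

section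
/- Let δ > 0 and let ψ be an admissible δ-mollifier. Let N ≥ 1, let u, v ∈ L¹(𝕋^N), and let ρ : 𝕋^N → [0,∞) be integrable with ∫_{𝕋^N} ρ(z) dz = 1. Then ∫_{𝕋^N} ∫_{𝕋^N} ρ(x−y) |u(x) − v(y)| dx dy ≤ 4δ + ∫_{𝕋^N} ∫_{𝕋^N} ∫_ℝ ∫_ℝ ρ(x−y) ψ(ξ−ζ) ( 1_{u(x)>ξ} 1_{v(y)≤ζ} + 1_{u(x)≤ξ} 1_{v(y)>ζ} ) dξ dζ dx dy. -/
/-!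
For real `a`, `b`, the substitution `ξ = r + ζ` followed by Fubini turns the kinetic double integral
`∫∫ ψ(ξ-ζ) (1_{a>ξ} 1_{b≤ζ} + 1_{a≤ξ} 1_{b>ζ}) dξ dζ` into `G(a - b)`, where
`G(t) = ∫ ψ(r) |t - r| dr` (`kinetic_integral`): for fixed `r` the bracket is, as a function of `ζ`,
the indicator of the half-open interval with endpoints `b` and `a - r`, whose length is
`|a - b - r|`. Since `ψ` is an even probability density, its mean vanishes and Jensen's inequality
gives `|t| ≤ G(t)`; since `ψ` lives on `(-δ, δ)`, also `G(t) ≤ |t| + δ`.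

Multiplying by `ρ(x - y)` and integrating, the lower bound gives the claim, even without the
term `4δ`. The upper bound supplies integrability on the product torus, because
`ρ(x - y) u(x)`, `ρ(x - y) v(y)` and `ρ(x - y)` are integrable, being convolution integrands.
-/

open MeasureTheory Set

/-- For a fixed shift `r`, the kinetic bracket is the indicator of the interval between `b` and
`a - r`. -/
lemma kinetic_bracket (a b r ζ : ℝ) :
    (Set.Iio a).indicator (1 : ℝ → ℝ) (r + ζ) * (Set.Ici b).indicator (1 : ℝ → ℝ) ζ
      + (Set.Ici a).indicator (1 : ℝ → ℝ) (r + ζ) * (Set.Iio b).indicator (1 : ℝ → ℝ) ζ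
      = (Set.Ico (min b (a - r)) (max b (a - r))).indicator (1 : ℝ → ℝ) ζ := by
  simp only [Set.indicator_apply, Set.mem_Iio, Set.mem_Ici, Set.mem_Ico, Pi.one_apply,
    min_le_iff, lt_max_iff]
  by_cases h1 : r + ζ < a <;> by_cases h2 : b ≤ ζ
  · have h3 : ζ < a - r := by linarith
    simp [h1, h2, h3, not_le.2 h1, not_lt.2 h2]
  · have h3 : ζ < a - r := by linarith
    simp [h1, h2, not_le.2 h1, not_le.2 h3]
  · have h3 : a - r ≤ ζ := by linarith
    simp [h1, h2, not_lt.2 h2, not_lt.2 h3]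
  · have h3 : a - r ≤ ζ := by linarith
    simp [h1, h2, h3, not_lt.1 h1, not_le.1 h2]

lemma integral_kinetic_bracket (a b r : ℝ) :
    ∫ ζ, (Set.Ico (min b (a - r)) (max b (a - r))).indicator (1 : ℝ → ℝ) ζ = |a - b - r| := by
  rw [integral_indicator_one measurableSet_Ico, Real.volume_real_Ico_of_le min_le_max,
    max_sub_min_eq_abs]
  congr 1
  ring

/-- The kinetic double integral equals `G(a - b)` with `G(t) = ∫ ψ(r) |t - r| dr`. -/
lemma kinetic_integral {δ : ℝ} {ψ : ℝ → ℝ} (hψi : Integrable ψ)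
    (hψs : ∀ r, δ ≤ |r| → ψ r = 0) (c a b : ℝ) :
    (∫ ζ : ℝ, ∫ ξ : ℝ, c * ψ (ξ - ζ)
      * ((Set.Iio a).indicator (1 : ℝ → ℝ) ξ * (Set.Ici b).indicator (1 : ℝ → ℝ) ζ
        + (Set.Ici a).indicator (1 : ℝ → ℝ) ξ * (Set.Iio b).indicator (1 : ℝ → ℝ) ζ))
      = c * ∫ r, ψ r * |a - b - r| := by
  have h1 : ∀ ζ : ℝ, (∫ ξ : ℝ, c * ψ (ξ - ζ)
      * ((Set.Iio a).indicator (1 : ℝ → ℝ) ξ * (Set.Ici b).indicator (1 : ℝ → ℝ) ζ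
        + (Set.Ici a).indicator (1 : ℝ → ℝ) ξ * (Set.Iio b).indicator (1 : ℝ → ℝ) ζ))
      = c * ∫ r, ψ r * (Set.Ico (min b (a - r)) (max b (a - r))).indicator (1 : ℝ → ℝ) ζ := by
    intro ζ
    rw [← integral_add_right_eq_self _ ζ, ← integral_const_mul]
    refine integral_congr_ae (.of_forall fun r => ?_)
    simp only [add_sub_cancel_right, kinetic_bracket, mul_assoc]
  simp_rw [h1]
  rw [integral_const_mul, integral_integral_swap]
  · simp_rw [integral_const_mul, integral_kinetic_bracket]
  -- On the support of `ψ`, the bracket is supported in a fixed bounded interval of `ζ`.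
  have hdom : Integrable (fun p : ℝ × ℝ =>
      (Set.Icc (min a b - δ) (max a b + δ)).indicator (1 : ℝ → ℝ) p.1 * ψ p.2)
      (volume.prod volume) := by
    refine Integrable.mul_prod ?_ hψi
    exact (integrable_indicator_iff measurableSet_Icc).2 (by simp [Pi.one_def])
  have hset : MeasurableSet {p : ℝ × ℝ |
      p.1 ∈ Set.Ico (min b (a - p.2)) (max b (a - p.2))} := by
    simp only [Set.mem_Ico]
    have hmin : Measurable fun p : ℝ × ℝ => min b (a - p.2) := by fun_prop
    have hmax : Measurable fun p : ℝ × ℝ => max b (a - p.2) := by fun_prop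
    exact (measurableSet_le hmin measurable_fst).inter (measurableSet_lt measurable_fst hmax)
  refine hdom.mono ?_ (.of_forall fun p => ?_)
  · refine hψi.aestronglyMeasurable.comp_snd.mul ?_
    exact ((measurable_one.indicator hset).aestronglyMeasurable :
      AEStronglyMeasurable ({p : ℝ × ℝ |
        p.1 ∈ Set.Ico (min b (a - p.2)) (max b (a - p.2))}.indicator (1 : ℝ × ℝ → ℝ)) _)
  · obtain ⟨ζ, r⟩ := p
    by_cases hr : δ ≤ |r|
    · simp [hψs r hr]
    · have hr' := abs_lt.1 (not_le.1 hr)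
      by_cases hz : ζ ∈ Set.Ico (min b (a - r)) (max b (a - r))
      · have hz' : ζ ∈ Set.Icc (min a b - δ) (max a b + δ) := by
          obtain ⟨h2, h3⟩ := hz
          have := min_le_left a b
          have := min_le_right a b
          have := le_max_left a b
          have := le_max_right a b
          constructor
          · rcases min_le_iff.1 h2 with h | h <;> linarith
          · rcases lt_max_iff.1 h3 with h | h <;> linarith
        simp [Function.uncurry, hz, hz']
      · simp only [Function.uncurry, Set.indicator_of_notMem hz, mul_zero, norm_zero]
        exact norm_nonneg _

lemma integrable_mul_of_support {δ : ℝ} {ψ : ℝ → ℝ} (hψi : Integrable ψ)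
    (hψs : ∀ r, δ ≤ |r| → ψ r = 0) {f : ℝ → ℝ} (hf : Measurable f)
    (C : ℝ) (hC : ∀ r, |r| < δ → |f r| ≤ C) : Integrable (fun r => ψ r * f r) := by
  refine (hψi.mul_const C).mono (hψi.aestronglyMeasurable.mul hf.aestronglyMeasurable)
    (.of_forall fun r => ?_)
  rcases le_or_gt δ |r| with h | h
  · simp [hψs r h]
  · rw [Real.norm_eq_abs, Real.norm_eq_abs, abs_mul, abs_mul]
    exact mul_le_mul_of_nonneg_left ((hC r h).trans (le_abs_self C)) (abs_nonneg _)

/-- Jensen's inequality for the centred density `ψ`, and the triangle inequality on its support. -/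
lemma mollified_abs_bounds {δ : ℝ} {ψ : ℝ → ℝ} (hψi : Integrable ψ)
    (hψ0 : ∀ r, 0 ≤ ψ r) (hψe : ∀ r, ψ (-r) = ψ r)
    (hψs : ∀ r, δ ≤ |r| → ψ r = 0) (hψ1 : (∫ r : ℝ, ψ r) = 1) (t : ℝ) :
    |t| ≤ (∫ r, ψ r * |t - r|) ∧ (∫ r, ψ r * |t - r|) ≤ |t| + δ := by
  have hI : Integrable (fun r => ψ r * |t - r|) :=
    integrable_mul_of_support hψi hψs (by fun_prop) (|t| + δ) fun r hr => by
      rw [abs_abs]; exact (abs_sub t r).trans (by linarith)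
  have hR : Integrable (fun r => ψ r * r) :=
    integrable_mul_of_support hψi hψs measurable_id δ fun r hr => hr.le
  have hmean : ∫ r, ψ r * r = 0 := by
    have h := integral_neg_eq_self (fun r => ψ r * r) volume
    simp only [hψe, mul_neg, integral_neg] at h
    linarith
  constructor
  · have h : ∫ r, ψ r * (t - r) = t := by
      simp_rw [mul_sub]
      rw [integral_sub (hψi.mul_const t) hR, integral_mul_const, hψ1, hmean]
      ring
    calc |t| = |∫ r, ψ r * (t - r)| := by rw [h]
      _ ≤ ∫ r, |ψ r * (t - r)| := abs_integral_le_integral_abs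
      _ = ∫ r, ψ r * |t - r| := by simp_rw [abs_mul, abs_of_nonneg (hψ0 _)]
  · calc (∫ r, ψ r * |t - r|) ≤ ∫ r, ψ r * (|t| + δ) := by
          refine integral_mono hI (hψi.mul_const _) fun r => ?_
          rcases le_or_gt δ |r| with h | h
          · simp [hψs r h]
          · exact mul_le_mul_of_nonneg_left ((abs_sub t r).trans (by linarith)) (hψ0 r)
      _ = |t| + δ := by rw [integral_mul_const, hψ1, one_mul]

/-- Integrability of `ρ(x - y) w(y)` in the pair `(x, y)`. -/
lemma integrable_kernel_mul {N : ℕ} {ρ w : (Fin N → AddCircle (1 : ℝ)) → ℝ}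
    (hρ : Integrable ρ) (hw : Integrable w) :
    Integrable (fun p : (Fin N → AddCircle (1 : ℝ)) × (Fin N → AddCircle (1 : ℝ)) =>
      ρ (p.1 - p.2) * w p.2) (volume.prod volume) := by
  have := hw.convolution_integrand (ContinuousLinearMap.mul ℝ ℝ) hρ
  simpa only [ContinuousLinearMap.mul_apply', mul_comm] using this

/-- Mollified lower bound for the doubled `L¹`-distance:
`∫∫ ρ(x-y)|u(x)-v(y)| dx dy ≤ 4δ + ∫∫∫∫ ρ(x-y) ψ(ξ-ζ)(1_{u(x)>ξ}1_{v(y)≤ζ} + 1_{u(x)≤ξ}1_{v(y)>ζ})`. -/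
theorem doubled_L1_le_mollified
    {N : ℕ} (hN : 1 ≤ N) {δ : ℝ} (hδ : 0 < δ) (ψ : ℝ → ℝ)
    (hψm : Measurable ψ) (hψ0 : ∀ r, 0 ≤ ψ r) (hψe : ∀ r, ψ (-r) = ψ r)
    (hψs : ∀ r, δ ≤ |r| → ψ r = 0) (hψ1 : (∫ r : ℝ, ψ r) = 1)
    (u v : (Fin N → AddCircle (1 : ℝ)) → ℝ)
    (hu : Integrable u) (hv : Integrable v)
    (ρ : (Fin N → AddCircle (1 : ℝ)) → ℝ) (hρ0 : ∀ z, 0 ≤ ρ z)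
    (hρi : Integrable ρ) (hρ1 : (∫ z, ρ z) = 1) :
    (∫ y, ∫ x, ρ (x - y) * |u x - v y|)
      ≤ 4 * δ + ∫ y, ∫ x, ∫ ζ : ℝ, ∫ ξ : ℝ,
          ρ (x - y) * ψ (ξ - ζ)
            * ((Set.Iio (u x)).indicator (1 : ℝ → ℝ) ξ * (Set.Ici (v y)).indicator (1 : ℝ → ℝ) ζ
              + (Set.Ici (u x)).indicator (1 : ℝ → ℝ) ξ
                * (Set.Iio (v y)).indicator (1 : ℝ → ℝ) ζ) := by
  have hψi : Integrable ψ := by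
    by_contra h
    rw [integral_undef h] at hψ1
    exact zero_ne_one hψ1
  simp_rw [kinetic_integral hψi hψs]
  set G : ℝ → ℝ := fun t => ∫ r, ψ r * |t - r| with hG
  have hGb : ∀ t, |t| ≤ G t ∧ G t ≤ |t| + δ :=
    mollified_abs_bounds hψi hψ0 hψe hψs hψ1
  have hGm : Measurable G := by
    have h : Measurable (fun p : ℝ × ℝ => ψ p.2 * |p.1 - p.2|) := by fun_prop
    exact h.stronglyMeasurable.integral_prod_right'.measurable
  have hone : Integrable (fun p : (Fin N → AddCircle (1 : ℝ)) × (Fin N → AddCircle (1 : ℝ)) =>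
      ρ (p.1 - p.2)) (volume.prod volume) := by
    have h := integrable_kernel_mul hρi
      (integrable_const (1 : ℝ) : Integrable (fun _ : Fin N → AddCircle (1 : ℝ) => (1 : ℝ)))
    exact h.congr (.of_forall fun p => mul_one _)
  have hV := integrable_kernel_mul hρi hv
  -- The factor `u(x)` is handled by reflecting `ρ` and exchanging the two variables.
  have hU : Integrable (fun p : (Fin N → AddCircle (1 : ℝ)) × (Fin N → AddCircle (1 : ℝ)) =>
      ρ (p.1 - p.2) * u p.1) (volume.prod volume) := by
    have : (volume : Measure (Fin N → AddCircle (1 : ℝ))).IsNegInvariant :=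
      Measure.pi.isNegInvariant _
    have h := (integrable_kernel_mul hρi.comp_neg hu).swap
    refine h.congr (.of_forall fun p => ?_)
    simp
  have hF : Integrable (fun p : (Fin N → AddCircle (1 : ℝ)) × (Fin N → AddCircle (1 : ℝ)) =>
      ρ (p.1 - p.2) * |u p.1 - v p.2|) (volume.prod volume) := by
    refine (hU.sub hV).abs.congr (.of_forall fun p => ?_)
    simp only [Pi.sub_apply]
    rw [← mul_sub, abs_mul, abs_of_nonneg (hρ0 _)]
  have hH : Integrable (fun p : (Fin N → AddCircle (1 : ℝ)) × (Fin N → AddCircle (1 : ℝ)) =>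
      ρ (p.1 - p.2) * G (u p.1 - v p.2)) (volume.prod volume) := by
    refine (hF.add (hone.mul_const δ)).mono (hone.aestronglyMeasurable.mul ?_)
      (.of_forall fun p => ?_)
    · exact (hGm.comp_aemeasurable
        (hu.aestronglyMeasurable.comp_fst.sub
          hv.aestronglyMeasurable.comp_snd).aemeasurable).aestronglyMeasurable
    · have hb := hGb (u p.1 - v p.2)
      have h0 := hρ0 (p.1 - p.2)
      simp only [Pi.add_apply, ← mul_add]
      rw [Real.norm_eq_abs, Real.norm_eq_abs, abs_mul, abs_mul]
      refine mul_le_mul_of_nonneg_left ?_ (abs_nonneg _)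
      rw [abs_of_nonneg ((abs_nonneg _).trans hb.1)]
      exact hb.2.trans (le_abs_self _)
  have key : (∫ y, ∫ x, ρ (x - y) * |u x - v y|) ≤ ∫ y, ∫ x, ρ (x - y) * G (u x - v y) := by
    have e1 := integral_prod_symm _ hF
    have e2 := integral_prod_symm _ hH
    simp only at e1 e2
    rw [← e1, ← e2]
    exact integral_mono hF hH fun p => mul_le_mul_of_nonneg_left (hGb _).1 (hρ0 _)
  linarith
end

section
/- Let N ≥ 1, γ > 0, let u, v ∈ L¹(𝕋^N), and let ρ : 𝕋^N → [0,∞) be integrable with ∫_{𝕋^N} ρ(z) dz = 1 and ρ(z) = 0 whenever the distance from z to 0 in 𝕋^N is at least γ. Then | ∫_{𝕋^N} ∫_{𝕋^N} ∫_ℝ ρ(x−y) 1_{u(x)>ξ} 1_{v(y)≤ξ} dξ dx dy − ∫_{𝕋^N} ∫_ℝ 1_{u(x)>ξ} 1_{v(x)≤ξ} dξ dx | ≤ sup_{z ∈ 𝕋^N, |z| < γ} ∫_{𝕋^N} |v(x−z) − v(x)| dx. -/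
/-!
Integrating in `ξ` turns the product of indicators into the positive part `(u x - v y)⁺`. After the
substitution `z = x - y` the doubled term becomes `∫ x, ∫ z, ρ z * (u x - v (x - z))⁺`, and since
`ρ` has mass one the undoubled term is `∫ x, ∫ z, ρ z * (u x - v x)⁺`. The positive part is
`1`-Lipschitz, so the difference is at most `∫ z, ρ z * ∫ x, |v (x - z) - v x|` by Fubini. Since
`ρ` vanishes outside the `γ`-ball, this average of the `L¹`-modulus of `v` is at most its supremum
over that ball. The supremum is a real `iSup`, so its boundedness (by `2 ‖v‖₁`) has to be checked.
-/

open MeasureTheory Set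

/-- The kinetic identity: the indicator of `v ≤ ξ < u` has integral `(u - v)⁺`. -/
lemma integral_indicator_kinetic (c a b : ℝ) :
    (∫ ξ : ℝ, c * ((Set.Iio a).indicator (1 : ℝ → ℝ) ξ * (Set.Ici b).indicator (1 : ℝ → ℝ) ξ))
      = c * max (a - b) 0 := by
  rw [integral_const_mul]
  congr 1
  have h : (fun ξ : ℝ => (Set.Iio a).indicator (1 : ℝ → ℝ) ξ * (Set.Ici b).indicator (1 : ℝ → ℝ) ξ)
      = (Set.Ico b a).indicator (1 : ℝ → ℝ) := by
    funext ξ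
    rw [← Set.Ici_inter_Iio, Set.inter_comm, Set.inter_indicator_one]
    rfl
  rw [h, integral_indicator_one measurableSet_Ico]
  simp [Measure.real, Real.volume_Ico, ENNReal.toReal_ofReal']

/-- The shear `(x, y) ↦ (x, x - y)` preserves the product of an invariant measure with itself. -/
lemma measurePreserving_shear {G : Type*} [AddCommGroup G] [MeasurableSpace G] [MeasurableAdd₂ G]
    [MeasurableNeg G] (μ : Measure G) [SFinite μ] [μ.IsAddLeftInvariant] [μ.IsNegInvariant] :
    MeasurePreserving (fun p : G × G => (p.1, p.1 - p.2)) (μ.prod μ) (μ.prod μ) := by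
  have h := ((MeasurePreserving.id μ).prod (Measure.measurePreserving_neg μ)).comp
    (measurePreserving_prod_neg_add μ μ)
  convert h using 1
  funext p
  simp [Prod.map]
  abel

/-- The doubling estimate on a commutative group with an invariant probability measure, with `M` an
upper bound for the `L¹`-modulus of `v` on the set where the kernel does not vanish. -/
lemma doubling_le {G : Type*} [AddCommGroup G] [MeasurableSpace G] [MeasurableAdd₂ G]
    [MeasurableNeg G] (μ : Measure G) [IsProbabilityMeasure μ] [μ.IsAddLeftInvariant]
    [μ.IsNegInvariant] {u v ρ : G → ℝ} (hu : Integrable u μ) (hv : Integrable v μ)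
    (hρ0 : ∀ z, 0 ≤ ρ z) (hρi : Integrable ρ μ) (hρ1 : (∫ z, ρ z ∂μ) = 1) {M : ℝ}
    (hM : ∀ z, ρ z ≠ 0 → (∫ x, |v (x - z) - v x| ∂μ) ≤ M) :
    |(∫ y, ∫ x, ρ (x - y) * max (u x - v y) 0 ∂μ ∂μ) - ∫ x, max (u x - v x) 0 ∂μ| ≤ M := by
  have i1 : Integrable (fun p : G × G => ρ p.2 * v (p.1 - p.2)) (μ.prod μ) :=
    hρi.convolution_integrand (ContinuousLinearMap.mul ℝ ℝ) hv
  have i2 : Integrable (fun p : G × G => ρ p.2 * u p.1) (μ.prod μ) := by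
    simpa only [mul_comm] using hu.mul_prod hρi
  have i3 : Integrable (fun p : G × G => ρ p.2 * v p.1) (μ.prod μ) := by
    simpa only [mul_comm] using hv.mul_prod hρi
  have iH : Integrable (fun p : G × G => ρ p.2 * max (u p.1 - v (p.1 - p.2)) 0) (μ.prod μ) := by
    refine (i2.sub i1).pos_part.congr (.of_forall fun p => ?_)
    simp [mul_max_of_nonneg _ _ (hρ0 p.2), mul_sub]
  have iK : Integrable (fun p : G × G => ρ p.2 * max (u p.1 - v p.1) 0) (μ.prod μ) := by
    refine (i2.sub i3).pos_part.congr (.of_forall fun p => ?_)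
    simp [mul_max_of_nonneg _ _ (hρ0 p.2), mul_sub]
  have iD : Integrable (fun p : G × G => ρ p.2 * |v (p.1 - p.2) - v p.1|) (μ.prod μ) := by
    refine (i1.sub i3).abs.congr (.of_forall fun p => ?_)
    simp [← mul_sub, abs_mul, abs_of_nonneg (hρ0 p.2)]
  have iA : Integrable (fun p : G × G => ρ (p.1 - p.2) * max (u p.1 - v p.2) 0) (μ.prod μ) := by
    have := (measurePreserving_shear μ).integrable_comp_of_integrable iH
    simpa [Function.comp_def] using this
  have e1 : (∫ y, ∫ x, ρ (x - y) * max (u x - v y) 0 ∂μ ∂μ)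
      = ∫ p, ρ p.2 * max (u p.1 - v (p.1 - p.2)) 0 ∂(μ.prod μ) := by
    rw [integral_integral_swap (f := fun y x => ρ (x - y) * max (u x - v y) 0) iA.swap,
      integral_prod _ iH]
    congr 1
    funext x
    rw [← integral_sub_left_eq_self (fun z => ρ z * max (u x - v (x - z)) 0) μ x]
    simp
  have e2 : (∫ x, max (u x - v x) 0 ∂μ)
      = ∫ p, ρ p.2 * max (u p.1 - v p.1) 0 ∂(μ.prod μ) := by
    rw [integral_prod _ iK]
    simp [integral_mul_const, hρ1]
  rw [e1, e2, ← integral_sub iH iK]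
  calc _ ≤ ∫ p, |ρ p.2 * max (u p.1 - v (p.1 - p.2)) 0 - ρ p.2 * max (u p.1 - v p.1) 0|
          ∂(μ.prod μ) := abs_integral_le_integral_abs
    _ ≤ ∫ p, ρ p.2 * |v (p.1 - p.2) - v p.1| ∂(μ.prod μ) := by
        refine integral_mono (iH.sub iK).abs iD fun p => ?_
        simp only
        rw [← mul_sub, abs_mul, abs_of_nonneg (hρ0 p.2)]
        refine mul_le_mul_of_nonneg_left ((abs_max_sub_max_le_abs _ _ _).trans_eq ?_) (hρ0 p.2)
        rw [abs_sub_comm]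
        congr 1
        ring
    _ = ∫ z, ρ z * ∫ x, |v (x - z) - v x| ∂μ ∂μ := by
        rw [integral_prod_symm _ iD]
        simp only [integral_const_mul]
    _ ≤ ∫ z, ρ z * M ∂μ := by
        have i := iD.integral_prod_right
        simp only [integral_const_mul] at i
        refine integral_mono i (hρi.mul_const M) fun z => ?_
        by_cases h : ρ z = 0
        · simp [h]
        · exact mul_le_mul_of_nonneg_left (hM z h) (hρ0 z)
    _ = M := by rw [integral_mul_const, hρ1, one_mul]

/-- Error made by doubling the space variable with a kernel `ρ` supported in the
`γ`-ball: it is controlled by the `L¹`-modulus of continuity of `v`. -/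
theorem space_doubling_error
    {N : ℕ} (hN : 1 ≤ N) {γ : ℝ} (hγ : 0 < γ)
    (u v : (Fin N → AddCircle (1 : ℝ)) → ℝ)
    (hu : Integrable u) (hv : Integrable v)
    (ρ : (Fin N → AddCircle (1 : ℝ)) → ℝ) (hρ0 : ∀ z, 0 ≤ ρ z)
    (hρi : Integrable ρ) (hρ1 : (∫ z, ρ z) = 1)
    (hρsupp : ∀ z : Fin N → AddCircle (1 : ℝ), γ ≤ dist z 0 → ρ z = 0) :
    |(∫ y, ∫ x, ∫ ξ : ℝ,
        ρ (x - y) * ((Set.Iio (u x)).indicator (1 : ℝ → ℝ) ξ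
          * (Set.Ici (v y)).indicator (1 : ℝ → ℝ) ξ))
      - ∫ x, ∫ ξ : ℝ,
          (Set.Iio (u x)).indicator (1 : ℝ → ℝ) ξ * (Set.Ici (v x)).indicator (1 : ℝ → ℝ) ξ|
      ≤ ⨆ z ∈ Metric.ball (0 : Fin N → AddCircle (1 : ℝ)) γ, ∫ x, |v (x - z) - v x| := by
  have hμ : IsProbabilityMeasure (volume : Measure (Fin N → AddCircle (1 : ℝ))) :=
    ⟨by rw [volume_pi, Measure.pi_univ]; simp⟩
  have hneg : (volume : Measure (AddCircle (1 : ℝ))).IsNegInvariant :=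
    Measure.IsAddHaarMeasure.isNegInvariant_of_regular _
  have hneg' : (volume : Measure (Fin N → AddCircle (1 : ℝ))).IsNegInvariant :=
    inferInstance
  have hc : ∀ a b : ℝ, (∫ ξ : ℝ, (Set.Iio a).indicator (1 : ℝ → ℝ) ξ
      * (Set.Ici b).indicator (1 : ℝ → ℝ) ξ) = max (a - b) 0 := fun a b => by
    simpa using integral_indicator_kinetic 1 a b
  simp only [integral_indicator_kinetic, hc]
  refine doubling_le volume hu hv hρ0 hρi hρ1 fun z hz => ?_
  have hzb : z ∈ Metric.ball (0 : Fin N → AddCircle (1 : ℝ)) γ := by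
    by_contra h
    exact hz (hρsupp z (not_lt.mp h))
  have hnn : ∀ z : Fin N → AddCircle (1 : ℝ), 0 ≤ ∫ x, |v (x - z) - v x| :=
    fun z => integral_nonneg fun x => abs_nonneg _
  have hbd : ∀ z : Fin N → AddCircle (1 : ℝ),
      (∫ x, |v (x - z) - v x|) ≤ 2 * ∫ x, |v x| := fun z => by
    have i : Integrable fun x => v (x - z) := hv.comp_sub_right z
    calc (∫ x, |v (x - z) - v x|) ≤ ∫ x, (|v (x - z)| + |v x|) :=
          integral_mono (i.sub hv).abs (i.abs.add hv.abs) fun x => abs_sub _ _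
      _ = 2 * ∫ x, |v x| := by
          rw [integral_add i.abs hv.abs, integral_sub_right_eq_self (fun x => |v x|) z, two_mul]
  have hB : 0 ≤ 2 * ∫ x, |v x| := (hnn z).trans (hbd z)
  -- Outside the ball the inner supremum is over the empty family and equals `0`.
  have hbdd : BddAbove (Set.range fun z : Fin N → AddCircle (1 : ℝ) =>
      ⨆ _ : z ∈ Metric.ball (0 : Fin N → AddCircle (1 : ℝ)) γ, ∫ x, |v (x - z) - v x|) := by
    refine ⟨2 * ∫ x, |v x|, ?_⟩
    rintro _ ⟨w, rfl⟩
    exact Real.iSup_le (fun _ => hbd w) hB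
  refine le_trans ?_ (le_ciSup hbdd z)
  exact (ciSup_pos (f := fun _ => ∫ x, |v (x - z) - v x|) hzb).ge
end

section
/- Let N ≥ 1 and let u, v ∈ L¹(𝕋^N). Let (γ_n) be a sequence of positive reals with γ_n → 0, and for each n let ρ_n : 𝕋^N → [0,∞) be integrable with ∫_{𝕋^N} ρ_n(z) dz = 1 and ρ_n(z) = 0 whenever |z| ≥ γ_n. Then, as n → ∞, ∫_{𝕋^N} ∫_{𝕋^N} ∫_ℝ ρ_n(x−y) 1_{u(x)>ξ} 1_{v(y)≤ξ} dξ dx dy converges to ∫_{𝕋^N} ∫_ℝ 1_{u(x)>ξ} 1_{v(x)≤ξ} dξ dx, i.e. ∫∫ ρ_n(x−y) (u(x)−v(y))⁺ dx dy → ∫ (u(x)−v(x))⁺ dx. -/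
/-!
Since `∫ ρ_n = 1`, the diagonal integral equals `∫∫ ρ_n(x-y)(u(y)-v(y))⁺ dx dy`, and `r ↦ r⁺` is
`1`-Lipschitz, so the error is at most `∫∫ ρ_n(x-y)|u(x)-u(y)| dx dy`. Approximate `u` in `L¹` by a
continuous `g`: the two terms `∫∫ ρ_n(x-y)|u-g|` (evaluated at `x` or at `y`) both equal `‖u-g‖₁`
by translation invariance, and `|g(x)-g(y)|` is uniformly small on the support of `ρ_n(x-y)`,
because `g` is uniformly continuous on the compact torus (`mollified_posPart_tendsto`). The first
limit is the same as the second, as `∫ 1_{a>ξ} 1_{b≤ξ} dξ = (a-b)⁺` (`integral_indicator_eq`).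
-/

open MeasureTheory Set Filter

/-- The kinetic formula `∫ 1_{a>ξ} 1_{b≤ξ} dξ = (a-b)⁺`. -/
lemma integral_indicator_eq (a b : ℝ) :
    (∫ ξ : ℝ, (Set.Iio a).indicator (1 : ℝ → ℝ) ξ * (Set.Ici b).indicator (1 : ℝ → ℝ) ξ)
      = max (a - b) 0 := by
  have h : (fun ξ : ℝ => (Set.Iio a).indicator (1 : ℝ → ℝ) ξ
      * (Set.Ici b).indicator (1 : ℝ → ℝ) ξ) = (Set.Ico b a).indicator (1 : ℝ → ℝ) := by
    funext ξ
    rw [← Set.Ici_inter_Iio, Set.inter_indicator_one, mul_comm]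
    rfl
  rw [h, integral_indicator_one measurableSet_Ico]
  simp [Measure.real, Real.volume_Ico, ENNReal.toReal_ofReal']

section Mollifier

-- Points of `G × G` are written `p = (y, x)`, matching the order of integration in the theorem.
variable {G : Type*} [NormedAddCommGroup G] [CompactSpace G] [SecondCountableTopology G]
  [MeasurableSpace G] [BorelSpace G] {μ : Measure G} [μ.IsAddHaarMeasure] [IsProbabilityMeasure μ]
  {r h : G → ℝ}

lemma integrable_kernel_fst (hr : Integrable r μ) (hh : Integrable h μ) :
    Integrable (fun p : G × G => r (p.2 - p.1) * h p.1) (μ.prod μ) := by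
  have := (Integrable.convolution_integrand (ContinuousLinearMap.mul ℝ ℝ) hh hr).swap
  refine this.congr (Eventually.of_forall fun p => ?_)
  simp [mul_comm]

lemma integrable_kernel_snd (hr : Integrable r μ) (hh : Integrable h μ) :
    Integrable (fun p : G × G => r (p.2 - p.1) * h p.2) (μ.prod μ) := by
  have := Integrable.convolution_integrand (ContinuousLinearMap.mul ℝ ℝ) hh hr.comp_neg
  refine this.congr (Eventually.of_forall fun p => ?_)
  simp [mul_comm]

lemma integral_kernel_fst (hr : Integrable r μ) (hr1 : ∫ z, r z ∂μ = 1) (hh : Integrable h μ) :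
    ∫ p : G × G, r (p.2 - p.1) * h p.1 ∂(μ.prod μ) = ∫ y, h y ∂μ := by
  rw [integral_prod _ (integrable_kernel_fst hr hh)]
  refine integral_congr_ae (Eventually.of_forall fun y => ?_)
  simp only
  rw [integral_mul_const, integral_sub_right_eq_self (μ := μ) r y, hr1, one_mul]

/-- Integrating out `y` gives mass one as well, since `y ↦ x - y` preserves Haar measure. -/
lemma integral_kernel_snd (hr : Integrable r μ) (hr1 : ∫ z, r z ∂μ = 1) (hh : Integrable h μ) :
    ∫ p : G × G, r (p.2 - p.1) * h p.2 ∂(μ.prod μ) = ∫ x, h x ∂μ := by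
  rw [integral_prod_symm _ (integrable_kernel_snd hr hh)]
  refine integral_congr_ae (Eventually.of_forall fun x => ?_)
  simp only
  rw [integral_mul_const, integral_sub_left_eq_self r μ x, hr1, one_mul]

/-- Integrability on the product comes from domination by `r(x-y)|u(x)-v(y)|`; it is what allows the
iterated integral to be treated as an integral over `G × G`. -/
lemma integrable_kernel_posPart {u v : G → ℝ} (hr : Integrable r μ)
    (hu : Integrable u μ) (hv : Integrable v μ) :
    Integrable (fun p : G × G => r (p.2 - p.1) * max (u p.2 - v p.1) 0) (μ.prod μ) := by
  have h1 := integrable_kernel_snd hr hu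
  have h2 := integrable_kernel_fst hr hv
  have h3 : AEStronglyMeasurable (fun p : G × G => r (p.2 - p.1)) (μ.prod μ) := by
    simpa using (integrable_kernel_fst hr (integrable_const (1 : ℝ))).aestronglyMeasurable
  have h4 : AEStronglyMeasurable (fun p : G × G => max (u p.2 - v p.1) 0) (μ.prod μ) :=
    (hu.1.comp_snd.sub hv.1.comp_fst).sup aestronglyMeasurable_const
  refine (h1.sub h2).mono (h3.mul h4) (Eventually.of_forall fun p => ?_)
  simp only [Pi.sub_apply, ← mul_sub, norm_mul, Real.norm_eq_abs]
  refine mul_le_mul_of_nonneg_left ?_ (abs_nonneg _)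
  simpa using abs_max_sub_max_le_abs (u p.2 - v p.1) 0 0

/-- A mollifier concentrated at scale `δ`, where `g` oscillates by at most `ε`, perturbs the
diagonal integral of `(u-v)⁺` by at most `2‖u-g‖₁ + ε`. -/
lemma mollified_posPart_error {u v g : G → ℝ} (hr0 : ∀ z, 0 ≤ r z) (hr : Integrable r μ)
    (hr1 : ∫ z, r z ∂μ = 1) (hu : Integrable u μ) (hv : Integrable v μ) (hg : Integrable g μ)
    {δ ε : ℝ} (hrs : ∀ z, δ ≤ dist z 0 → r z = 0)
    (hgδ : ∀ x y, dist x y < δ → |g x - g y| ≤ ε) :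
    |(∫ y, ∫ x, r (x - y) * max (u x - v y) 0 ∂μ ∂μ) - ∫ x, max (u x - v x) 0 ∂μ|
      ≤ 2 * (∫ x, |u x - g x| ∂μ) + ε := by
  have hA := integrable_kernel_posPart hr hu hv
  have huv : Integrable (fun x => max (u x - v x) 0) μ := (hu.sub hv).pos_part
  have hB := integrable_kernel_fst hr huv
  have hug : Integrable (fun x => |u x - g x|) μ := (hu.sub hg).abs
  have hE : Integrable (fun _ : G => ε) μ := integrable_const ε
  have i1 := integrable_kernel_snd hr hug
  have i2 := integrable_kernel_fst hr hug
  have i3 := integrable_kernel_fst hr hE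
  rw [← integral_prod (fun p : G × G => r (p.2 - p.1) * max (u p.2 - v p.1) 0) hA,
    ← integral_kernel_fst hr hr1 huv, ← integral_sub hA hB]
  refine abs_integral_le_integral_abs.trans ?_
  have key : ∀ p : G × G,
      |r (p.2 - p.1) * max (u p.2 - v p.1) 0 - r (p.2 - p.1) * max (u p.1 - v p.1) 0|
        ≤ (r (p.2 - p.1) * |u p.2 - g p.2| + r (p.2 - p.1) * |u p.1 - g p.1|)
          + r (p.2 - p.1) * ε := by
    rintro ⟨y, x⟩
    simp only
    rcases lt_or_ge (dist x y) δ with hd | hd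
    · rw [← mul_sub, abs_mul, abs_of_nonneg (hr0 _), ← mul_add, ← mul_add]
      refine mul_le_mul_of_nonneg_left ?_ (hr0 _)
      have e1 := abs_max_sub_max_le_abs (u x - v y) (u y - v y) 0
      have e2 : u x - v y - (u y - v y) = (u x - g x) + (g x - g y) - (u y - g y) := by ring
      rw [e2] at e1
      have e3 := abs_sub (u x - g x + (g x - g y)) (u y - g y)
      have e4 := abs_add_le (u x - g x) (g x - g y)
      linarith [hgδ x y hd]
    -- at distance at least `δ` the mollifier vanishes, and so do both sides
    · rw [hrs (x - y) (by simpa [dist_eq_norm] using hd)]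
      simp
  refine (integral_mono (hA.sub hB).abs ((i1.add i2).add i3) key).trans (le_of_eq ?_)
  have s1 := integral_add (i1.add i2) i3
  have s2 := integral_add i1 i2
  simp only [Pi.add_apply] at s1 s2 ⊢
  rw [s1, s2, integral_kernel_snd hr hr1 hug, integral_kernel_fst hr hr1 hug,
    integral_kernel_fst hr hr1 hE]
  simp
  ring

/-- The doubling-of-variables limit on a compact abelian group. -/
lemma mollified_posPart_tendsto {u v : G → ℝ} (hu : Integrable u μ) (hv : Integrable v μ)
    {γ : ℕ → ℝ} (hγ0 : Tendsto γ atTop (nhds 0)) {ρ : ℕ → G → ℝ} (hρ0 : ∀ n z, 0 ≤ ρ n z)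
    (hρi : ∀ n, Integrable (ρ n) μ) (hρ1 : ∀ n, (∫ z, ρ n z ∂μ) = 1)
    (hρsupp : ∀ n, ∀ z, γ n ≤ dist z 0 → ρ n z = 0) :
    Tendsto (fun n => ∫ y, ∫ x, ρ n (x - y) * max (u x - v y) 0 ∂μ ∂μ)
      atTop (nhds (∫ x, max (u x - v x) 0 ∂μ)) := by
  rw [Metric.tendsto_atTop']
  intro ε hε
  obtain ⟨g, -, hgu, hgc, hgi⟩ :=
    hu.exists_hasCompactSupport_integral_sub_le (show 0 < ε / 4 by positivity)
  obtain ⟨δ, hδ, hgδ⟩ := Metric.uniformContinuous_iff.1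
    (CompactSpace.uniformContinuous_of_continuous hgc) (ε / 4) (by positivity)
  obtain ⟨n₀, hn₀⟩ := (hγ0.eventually_lt_const hδ).exists_forall_of_atTop
  refine ⟨n₀, fun n hn => ?_⟩
  have := mollified_posPart_error (hρ0 n) (hρi n) (hρ1 n) hu hv hgi (hρsupp n)
    (ε := ε / 4) fun x y hxy => (hgδ (hxy.trans (hn₀ n hn.le))).le
  simp only [Real.norm_eq_abs] at hgu
  rw [Real.dist_eq]
  linarith

end Mollifier

/-- As the concentration parameters `γ_n → 0`, the doubled-variable quantity converges to
the diagonal one: `∫∫ ρ_n(x-y)(u(x)-v(y))⁺ dx dy → ∫ (u(x)-v(x))⁺ dx`. -/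
theorem space_doubling_limit
    {N : ℕ} (hN : 1 ≤ N)
    (u v : (Fin N → AddCircle (1 : ℝ)) → ℝ)
    (hu : Integrable u) (hv : Integrable v)
    (γ : ℕ → ℝ) (hγ : ∀ n, 0 < γ n) (hγ0 : Tendsto γ atTop (nhds 0))
    (ρ : ℕ → (Fin N → AddCircle (1 : ℝ)) → ℝ) (hρ0 : ∀ n z, 0 ≤ ρ n z)
    (hρi : ∀ n, Integrable (ρ n)) (hρ1 : ∀ n, (∫ z, ρ n z) = 1)
    (hρsupp : ∀ n, ∀ z : Fin N → AddCircle (1 : ℝ), γ n ≤ dist z 0 → ρ n z = 0) :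
    Tendsto (fun n => ∫ y, ∫ x, ∫ ξ : ℝ,
        ρ n (x - y) * ((Set.Iio (u x)).indicator (1 : ℝ → ℝ) ξ
          * (Set.Ici (v y)).indicator (1 : ℝ → ℝ) ξ))
      atTop (nhds (∫ x, ∫ ξ : ℝ,
        (Set.Iio (u x)).indicator (1 : ℝ → ℝ) ξ
          * (Set.Ici (v x)).indicator (1 : ℝ → ℝ) ξ)) ∧
    Tendsto (fun n => ∫ y, ∫ x, ρ n (x - y) * max (u x - v y) 0)
      atTop (nhds (∫ x, max (u x - v x) 0)) := by
  have hT : IsProbabilityMeasure (volume : Measure (AddCircle (1 : ℝ))) :=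
    ⟨by rw [AddCircle.measure_univ, ENNReal.ofReal_one]⟩
  have h := mollified_posPart_tendsto hu hv hγ0 hρ0 hρi hρ1 hρsupp
  refine ⟨?_, h⟩
  simp only [integral_const_mul, integral_indicator_eq]
  exact h
end

section
/- Let δ > 0 and let ψ be an admissible δ-mollifier. Let N ≥ 1, let u, v ∈ L¹(𝕋^N), and let ρ : 𝕋^N → [0,∞) be integrable with ∫_{𝕋^N} ρ(z) dz = 1. Define the error term E := ∫_{𝕋^N} ∫_{𝕋^N} ∫_ℝ ∫_ℝ ρ(x−y) ψ(ξ−ζ) ( 1_{u(x)>ξ} 1_{v(y)≤ζ} + 1_{u(x)≤ξ} 1_{v(y)>ζ} ) dξ dζ dx dy − ∫_{𝕋^N} |u(x) − v(x)| dx. Then |E| ≤ 4δ + 2 ∫_{𝕋^N} ∫_{𝕋^N} ρ(x−y) |v(x) − v(y)| dx dy. -/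
/-!
Substituting `ξ = r + ζ`, for fixed `r` the indicators select those `ζ` lying between `b = v y` and
`a - r = u x - r`, an interval of length `|a - b - r|`. Hence the two inner integrals equal
`∫ r, ψ r * |a - b - r|`, which differs from `|a - b|` by at most `∫ r, ψ r * |r| ≤ δ`
(`kernel_eq`, `smoothAbs_sub_abs_le`).

The triangle inequality then gives the pointwise bound
`|smoothAbs ψ (u x - v y) - |u x - v x|| ≤ δ + |v x - v y|`, and one integrates it against
`ρ (x - y)`, which has total mass one in `y` for each fixed `x`. Integrability on the product of
the torus with itself is that of convolution integrands. This even yields the bound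
with `δ` and `1` in place of `4 * δ` and `2`.
-/

open MeasureTheory Set

/-- The function `|·|` mollified by `ψ`, that is, the convolution of `ψ` with `|·|`. -/
noncomputable def smoothAbs (ψ : ℝ → ℝ) (t : ℝ) : ℝ := ∫ r : ℝ, ψ r * |t - r|

lemma integral_indicator_pair (a b r : ℝ) :
    ∫ ζ : ℝ, ((Set.Iio a).indicator (1 : ℝ → ℝ) (r + ζ) * (Set.Ici b).indicator (1 : ℝ → ℝ) ζ
      + (Set.Ici a).indicator (1 : ℝ → ℝ) (r + ζ) * (Set.Iio b).indicator (1 : ℝ → ℝ) ζ)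
      = |a - b - r| := by
  have h : ∀ ζ : ℝ, (Set.Iio a).indicator (1 : ℝ → ℝ) (r + ζ) *
        (Set.Ici b).indicator (1 : ℝ → ℝ) ζ
      + (Set.Ici a).indicator (1 : ℝ → ℝ) (r + ζ) * (Set.Iio b).indicator (1 : ℝ → ℝ) ζ
      = (Set.Ico b (a - r)).indicator (1 : ℝ → ℝ) ζ
        + (Set.Ico (a - r) b).indicator (1 : ℝ → ℝ) ζ := by
    intro ζ
    simp only [Set.indicator_apply, Set.mem_Iio, Set.mem_Ici, Set.mem_Ico, Pi.one_apply]
    split_ifs <;> first | (norm_num; done) | (exfalso; grind)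
  have hint : ∀ c d : ℝ, Integrable ((Set.Ico c d).indicator (1 : ℝ → ℝ)) := fun c d =>
    (integrable_indicator_iff measurableSet_Ico).2
      (integrableOn_const (by simp))
  simp_rw [h]
  rw [integral_add (hint _ _) (hint _ _), integral_indicator_one measurableSet_Ico,
    integral_indicator_one measurableSet_Ico, Real.volume_real_Ico, Real.volume_real_Ico]
  rcases le_total (a - b - r) 0 with h0 | h0
  · rw [abs_of_nonpos h0, max_eq_right (by linarith), max_eq_left (by linarith)]; ring
  · rw [abs_of_nonneg h0, max_eq_left (by linarith), max_eq_right (by linarith)]; ring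

/-- The two inner integrals depend on `a = u x` and `b = v y` only through `a - b`. -/
lemma kernel_eq {δ : ℝ} {ψ : ℝ → ℝ} (hψm : Measurable ψ) (hψ0 : ∀ r, 0 ≤ ψ r)
    (hψs : ∀ r, δ ≤ |r| → ψ r = 0) (hψi : Integrable ψ) (a b : ℝ) :
    (∫ ζ : ℝ, ∫ ξ : ℝ, ψ (ξ - ζ) *
      ((Set.Iio a).indicator (1 : ℝ → ℝ) ξ * (Set.Ici b).indicator (1 : ℝ → ℝ) ζ
      + (Set.Ici a).indicator (1 : ℝ → ℝ) ξ * (Set.Iio b).indicator (1 : ℝ → ℝ) ζ))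
      = smoothAbs ψ (a - b) := by
  have h1 : ∀ ζ : ℝ, (∫ ξ : ℝ, ψ (ξ - ζ) *
      ((Set.Iio a).indicator (1 : ℝ → ℝ) ξ * (Set.Ici b).indicator (1 : ℝ → ℝ) ζ
      + (Set.Ici a).indicator (1 : ℝ → ℝ) ξ * (Set.Iio b).indicator (1 : ℝ → ℝ) ζ))
      = ∫ r : ℝ, ψ r *
      ((Set.Iio a).indicator (1 : ℝ → ℝ) (r + ζ) * (Set.Ici b).indicator (1 : ℝ → ℝ) ζ
      + (Set.Ici a).indicator (1 : ℝ → ℝ) (r + ζ) * (Set.Iio b).indicator (1 : ℝ → ℝ) ζ) := by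
    intro ζ
    rw [← integral_add_right_eq_self _ ζ]
    simp only [add_sub_cancel_right]
  simp_rw [h1]
  rw [integral_integral_swap]
  · simp_rw [integral_const_mul, integral_indicator_pair]
    rfl
  -- On the support of the integrand `|r| < δ`, so `ζ` stays within `|a| + |b| + δ` of the origin.
  · set M := |a| + |b| + δ with hM
    have hdom : Integrable (fun p : ℝ × ℝ =>
        (Set.Icc (-M) M).indicator (1 : ℝ → ℝ) p.1 * ψ p.2) (volume.prod volume) :=
      Integrable.mul_prod ((integrable_indicator_iff measurableSet_Icc).2
        (integrableOn_const (by simp))) hψi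
    refine hdom.mono' ?_ (Filter.Eventually.of_forall ?_)
    · have hi : ∀ s : Set ℝ, MeasurableSet s → Measurable (s.indicator (1 : ℝ → ℝ)) :=
        fun s hs => measurable_one.indicator hs
      have m1 := hi (Set.Iio a) measurableSet_Iio
      have m2 := hi (Set.Ici a) measurableSet_Ici
      have m3 := hi (Set.Iio b) measurableSet_Iio
      have m4 := hi (Set.Ici b) measurableSet_Ici
      apply Measurable.aestronglyMeasurable
      simp only [Function.uncurry_def]
      have ms : Measurable (fun p : ℝ × ℝ => p.2 + p.1) := by fun_prop
      exact (hψm.comp measurable_snd).mul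
        (((m1.comp ms).mul (m4.comp measurable_fst)).add
          ((m2.comp ms).mul (m3.comp measurable_fst)))
    · rintro ⟨ζ, r⟩
      simp only [Function.uncurry_apply_pair, norm_mul, Real.norm_eq_abs, abs_of_nonneg (hψ0 r)]
      rw [mul_comm _ (ψ r)]
      by_cases hr : δ ≤ |r|
      · simp [hψs r hr]
      · refine mul_le_mul_of_nonneg_left ?_ (hψ0 r)
        have ha := abs_le.1 (le_refl |a|)
        have hb := abs_le.1 (le_refl |b|)
        have hr' := abs_lt.1 (not_le.1 hr)
        have ha0 := abs_nonneg a
        have hb0 := abs_nonneg b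
        simp only [Set.indicator_apply, Set.mem_Iio, Set.mem_Ici, Set.mem_Icc, Pi.one_apply]
        split_ifs <;> first | (norm_num; done) | (exfalso; grind)

lemma integrable_mul_abs {δ : ℝ} {ψ : ℝ → ℝ} (hψ0 : ∀ r, 0 ≤ ψ r)
    (hψs : ∀ r, δ ≤ |r| → ψ r = 0) (hψi : Integrable ψ) (t : ℝ) :
    Integrable (fun r => ψ r * |t - r|) := by
  refine (hψi.mul_const (|t| + δ)).mono'
    (hψi.aestronglyMeasurable.mul (by fun_prop)) (Filter.Eventually.of_forall fun r => ?_)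
  rw [norm_mul, Real.norm_eq_abs, Real.norm_eq_abs, abs_abs, abs_of_nonneg (hψ0 r)]
  by_cases hr : δ ≤ |r|
  · simp [hψs r hr]
  · exact mul_le_mul_of_nonneg_left ((abs_sub t r).trans (by linarith)) (hψ0 r)

lemma smoothAbs_sub_abs_le {δ : ℝ} {ψ : ℝ → ℝ} (hψ0 : ∀ r, 0 ≤ ψ r)
    (hψs : ∀ r, δ ≤ |r| → ψ r = 0) (hψi : Integrable ψ) (hψ1 : (∫ r : ℝ, ψ r) = 1) (t : ℝ) :
    |smoothAbs ψ t - (|t|)| ≤ δ := by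
  have h1 : |t| = ∫ r : ℝ, ψ r * |t| := by rw [integral_mul_const, hψ1, one_mul]
  have h2 : δ = ∫ r : ℝ, ψ r * δ := by rw [integral_mul_const, hψ1, one_mul]
  rw [smoothAbs, h1, ← integral_sub (integrable_mul_abs hψ0 hψs hψi t) (hψi.mul_const _)]
  conv_rhs => rw [h2]
  rw [← Real.norm_eq_abs]
  refine norm_integral_le_of_norm_le (hψi.mul_const δ) (Filter.Eventually.of_forall fun r => ?_)
  rw [← mul_sub, norm_mul, Real.norm_eq_abs, Real.norm_eq_abs, abs_of_nonneg (hψ0 r)]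
  by_cases hr : δ ≤ |r|
  · simp [hψs r hr]
  · refine mul_le_mul_of_nonneg_left ((abs_abs_sub_abs_le _ _).trans ?_) (hψ0 r)
    rw [sub_sub_cancel_left, abs_neg]
    exact (not_le.1 hr).le

lemma measurable_smoothAbs {ψ : ℝ → ℝ} (hψm : Measurable ψ) : Measurable (smoothAbs ψ) := by
  have h : StronglyMeasurable (Function.uncurry fun t r : ℝ => ψ r * |t - r|) := by
    apply Measurable.stronglyMeasurable
    simp only [Function.uncurry_def]
    fun_prop
  exact h.integral_prod_right.measurable

section Torus

variable {N : ℕ}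

/-- Stated explicitly because instance search does not find it on the product. -/
instance torus_isNegInvariant :
    (volume : Measure (Fin N → AddCircle (1 : ℝ))).IsNegInvariant :=
  Measure.IsAddHaarMeasure.isNegInvariant_of_regular volume

lemma integrable_kernel_mul_fst {ρ f : (Fin N → AddCircle (1 : ℝ)) → ℝ}
    (hρ : Integrable ρ) (hf : Integrable f) :
    Integrable (fun p : (Fin N → AddCircle (1 : ℝ)) × (Fin N → AddCircle (1 : ℝ)) =>
      ρ (p.2 - p.1) * f p.1) (volume.prod volume) := by
  have h := (Integrable.convolution_integrand (ContinuousLinearMap.mul ℝ ℝ) hf hρ).swap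
  refine h.congr (Filter.Eventually.of_forall fun p => ?_)
  simp [mul_comm]

lemma integrable_kernel_mul_snd {ρ f : (Fin N → AddCircle (1 : ℝ)) → ℝ}
    (hρ : Integrable ρ) (hf : Integrable f) :
    Integrable (fun p : (Fin N → AddCircle (1 : ℝ)) × (Fin N → AddCircle (1 : ℝ)) =>
      ρ (p.2 - p.1) * f p.2) (volume.prod volume) := by
  have h := Integrable.convolution_integrand (ContinuousLinearMap.mul ℝ ℝ) hf hρ.comp_neg
  refine h.congr (Filter.Eventually.of_forall fun p => ?_)
  simp [mul_comm]

lemma integral_kernel_mul_snd {ρ f : (Fin N → AddCircle (1 : ℝ)) → ℝ}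
    (hρ : Integrable ρ) (hρ1 : (∫ z, ρ z) = 1) (hf : Integrable f) :
    ∫ p : (Fin N → AddCircle (1 : ℝ)) × (Fin N → AddCircle (1 : ℝ)),
      ρ (p.2 - p.1) * f p.2 ∂(volume.prod volume) = ∫ x, f x := by
  rw [integral_prod_symm _ (integrable_kernel_mul_snd hρ hf)]
  refine integral_congr_ae (Filter.Eventually.of_forall fun x => ?_)
  simp only
  rw [integral_mul_const, integral_sub_left_eq_self ρ volume x, hρ1, one_mul]

end Torus

/-- Bound on the error term `E_t(γ,δ)` between the doubled, mollified quantity and the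
`L¹`-distance on the diagonal. -/
theorem error_term_bound
    {N : ℕ} (hN : 1 ≤ N) {δ : ℝ} (hδ : 0 < δ) (ψ : ℝ → ℝ)
    (hψm : Measurable ψ) (hψ0 : ∀ r, 0 ≤ ψ r) (hψe : ∀ r, ψ (-r) = ψ r)
    (hψs : ∀ r, δ ≤ |r| → ψ r = 0) (hψ1 : (∫ r : ℝ, ψ r) = 1)
    (u v : (Fin N → AddCircle (1 : ℝ)) → ℝ)
    (hu : Integrable u) (hv : Integrable v)
    (ρ : (Fin N → AddCircle (1 : ℝ)) → ℝ) (hρ0 : ∀ z, 0 ≤ ρ z)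
    (hρi : Integrable ρ) (hρ1 : (∫ z, ρ z) = 1) :
    |(∫ y, ∫ x, ∫ ζ : ℝ, ∫ ξ : ℝ,
        ρ (x - y) * ψ (ξ - ζ)
          * ((Set.Iio (u x)).indicator (1 : ℝ → ℝ) ξ * (Set.Ici (v y)).indicator (1 : ℝ → ℝ) ζ
            + (Set.Ici (u x)).indicator (1 : ℝ → ℝ) ξ
              * (Set.Iio (v y)).indicator (1 : ℝ → ℝ) ζ))
      - (∫ x, |u x - v x|)| ≤ 4 * δ + 2 * ∫ y, ∫ x, ρ (x - y) * |v x - v y| := by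
  have hψi : Integrable ψ := by
    by_contra h
    rw [integral_undef h] at hψ1
    exact zero_ne_one hψ1
  simp_rw [mul_assoc (ρ _), integral_const_mul, kernel_eq hψm hψ0 hψs hψi]
  have hS := smoothAbs_sub_abs_le hψ0 hψs hψi hψ1
  have hone : Integrable (fun _ : Fin N → AddCircle (1 : ℝ) => (1 : ℝ)) := integrable_const _
  have iρ := integrable_kernel_mul_fst hρi hone
  have iV : Integrable (fun p : (Fin N → AddCircle (1 : ℝ)) × (Fin N → AddCircle (1 : ℝ)) =>
      ρ (p.2 - p.1) * |v p.2 - v p.1|) (volume.prod volume) := by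
    refine ((integrable_kernel_mul_snd hρi hv).sub (integrable_kernel_mul_fst hρi hv)).abs.congr
      (Filter.Eventually.of_forall fun p => ?_)
    simp only [Pi.sub_apply]
    rw [← mul_sub, abs_mul, abs_of_nonneg (hρ0 _)]
  have iD := integrable_kernel_mul_snd hρi (hu.sub hv).abs
  have iB : Integrable (fun p : (Fin N → AddCircle (1 : ℝ)) × (Fin N → AddCircle (1 : ℝ)) =>
      δ * (ρ (p.2 - p.1) * 1) + ρ (p.2 - p.1) * |v p.2 - v p.1|) (volume.prod volume) :=
    (iρ.const_mul δ).add iV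
  have hpt : ∀ x y, |ρ (x - y) * smoothAbs ψ (u x - v y) - ρ (x - y) * (|u x - v x|)| ≤
      δ * (ρ (x - y) * 1) + ρ (x - y) * |v x - v y| := by
    intro x y
    rw [← mul_sub, abs_mul, abs_of_nonneg (hρ0 _)]
    have h1 := abs_le.1 (hS (u x - v y))
    have h2 := abs_le.1 (abs_abs_sub_abs_le (u x - v y) (u x - v x))
    rw [sub_sub_sub_cancel_left] at h2
    have h3 : |smoothAbs ψ (u x - v y) - (|u x - v x|)| ≤ δ + |v x - v y| := by
      rw [abs_le]; constructor <;> linarith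
    calc _ ≤ ρ (x - y) * (δ + |v x - v y|) := mul_le_mul_of_nonneg_left h3 (hρ0 _)
      _ = _ := by ring
  have iF : Integrable (fun p : (Fin N → AddCircle (1 : ℝ)) × (Fin N → AddCircle (1 : ℝ)) =>
      ρ (p.2 - p.1) * smoothAbs ψ (u p.2 - v p.1)) (volume.prod volume) := by
    refine (iB.add iD).mono' ?_ (Filter.Eventually.of_forall fun p => ?_)
    · have m1 : AEStronglyMeasurable
          (fun p : (Fin N → AddCircle (1 : ℝ)) × (Fin N → AddCircle (1 : ℝ)) =>
            ρ (p.2 - p.1)) (volume.prod volume) := by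
        simpa using iρ.aestronglyMeasurable
      refine m1.mul (AEMeasurable.aestronglyMeasurable ?_)
      exact (measurable_smoothAbs hψm).comp_aemeasurable
        ((hu.aestronglyMeasurable.comp_snd.aemeasurable).sub
          (hv.aestronglyMeasurable.comp_fst.aemeasurable))
    · have h := hpt p.2 p.1
      have h' := mul_nonneg (hρ0 (p.2 - p.1)) (abs_nonneg (u p.2 - v p.2))
      simp only [Pi.add_apply, Pi.sub_apply, Real.norm_eq_abs]
      have h4 := abs_sub_abs_le_abs_sub (ρ (p.2 - p.1) * smoothAbs ψ (u p.2 - v p.1))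
        (ρ (p.2 - p.1) * |u p.2 - v p.2|)
      rw [abs_of_nonneg h'] at h4
      linarith
  have hmass : ∫ p : (Fin N → AddCircle (1 : ℝ)) × (Fin N → AddCircle (1 : ℝ)),
      ρ (p.2 - p.1) * 1 ∂(volume.prod volume) = 1 := by
    rw [integral_kernel_mul_snd hρi hρ1 hone]
    simp [Measure.real, volume_pi, Measure.pi_univ]
  have hD := integral_kernel_mul_snd hρi hρ1 (hu.sub hv).abs
  simp only [Pi.sub_apply] at hD iD
  have eF := integral_prod _ iF
  have eV := integral_prod _ iV
  simp only at eF eV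
  rw [← eF, ← eV, ← hD, ← integral_sub iF iD]
  have hV0 : 0 ≤ ∫ p : (Fin N → AddCircle (1 : ℝ)) × (Fin N → AddCircle (1 : ℝ)),
      ρ (p.2 - p.1) * |v p.2 - v p.1| ∂(volume.prod volume) :=
    integral_nonneg fun p => mul_nonneg (hρ0 _) (abs_nonneg _)
  have hmain := norm_integral_le_of_norm_le iB (Filter.Eventually.of_forall fun p =>
    (Real.norm_eq_abs _).le.trans (hpt p.2 p.1))
  rw [integral_add (iρ.const_mul δ) iV, integral_const_mul, hmass, Real.norm_eq_abs] at hmain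
  linarith
end
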